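/- arXiv:math/0309082 — 2 statements merged into one kernel-verified Lean document; each statement's English description precedes it below -/
import Mathlib

section
/- For every q with 0 < q < 1 and all real λ, μ, the series Σ_{i=0}^∞ q^i p_i(λ) p_i(μ) e^{−μ²} converges and its sum equals the Mehler kernel K(q; λ, μ) = (π(1 − q²))^{−1/2} exp( −q²λ²/(1 − q²) − μ²/(1 − q²) + 2qλμ/(1 − q²) ). -/
/-- The physicist Hermite polynomials, as real functions:
`H₀ = 1`, `H₁(x) = 2x`, `H_{n+2}(x) = 2x·H_{n+1}(x) − 2(n+1)·H_n(x)`. -/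
noncomputable def physHermite : ℕ → ℝ → ℝ
  | 0 => fun _ => 1
  | 1 => fun x => 2 * x
  | (n + 2) => fun x => 2 * x * physHermite (n + 1) x - 2 * (n + 1) * physHermite n x

/-- The normalized Hermite polynomials `p_k(x) = H_k(x)/√(2^k k! √π)`, so that
`∫ p_i p_j e^{−x²} dx = δ_{ij}`. -/
noncomputable def normHermite (k : ℕ) (x : ℝ) : ℝ :=
  physHermite k x / Real.sqrt (2 ^ k * k.factorial * Real.sqrt Real.pi)

/-- The Mehler kernel
`K(q; λ, μ) = (π(1 − q²))^{−1/2} exp(−q²λ²/(1−q²) − μ²/(1−q²) + 2qλμ/(1−q²))`. -/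
noncomputable def mehlerK (q lam mu : ℝ) : ℝ :=
  (Real.sqrt (Real.pi * (1 - q ^ 2)))⁻¹ *
    Real.exp (-q ^ 2 * lam ^ 2 / (1 - q ^ 2) - mu ^ 2 / (1 - q ^ 2)
      + 2 * q * lam * mu / (1 - q ^ 2))

theorem aux_gen (x σ : ℂ) (G : ℕ → ℂ) (h0 : G 0 = 1) (h1 : G 1 = 2 * x)
    (h2 : ∀ n : ℕ, G (n + 2) = 2 * x * G (n + 1) + 2 * σ * (n + 1) * G n) (t : ℂ) :
    HasSum (fun n : ℕ => G n * t ^ n / (n.factorial : ℂ)) (Complex.exp (2 * x * t + σ * t ^ 2)) := by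
  set f : ℂ → ℂ := fun t => Complex.exp (2 * x * t + σ * t ^ 2) with hf
  have hcd : ContDiff ℂ ⊤ f := by
    rw [hf]; fun_prop
  have hd : ∀ n : ℕ, Differentiable ℂ (iteratedDeriv n f) := fun n =>
    hcd.differentiable_iteratedDeriv n (by exact_mod_cast WithTop.coe_lt_top _)
  have hf1 : iteratedDeriv 1 f = fun t => (2 * x + 2 * σ * t) * f t := by
    rw [iteratedDeriv_one]
    ext t
    have : HasDerivAt f (Complex.exp (2 * x * t + σ * t ^ 2) * (2 * x * 1 + σ * ((2 : ℕ) * t ^ 1))) t := by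
      have := (((hasDerivAt_id t).const_mul (2 * x)).add ((hasDerivAt_pow 2 t).const_mul σ)).cexp
      simpa using this
    rw [this.deriv]
    simp only [hf]; push_cast; ring
  have key : ∀ n : ℕ, ∀ t, iteratedDeriv (n + 2) f t =
      (2 * x + 2 * σ * t) * iteratedDeriv (n + 1) f t + 2 * σ * (n + 1) * iteratedDeriv n f t := by
    have hlin : ∀ t : ℂ, HasDerivAt (fun t : ℂ => 2 * x + 2 * σ * t) (2 * σ) t := by
      intro t
      simpa using ((hasDerivAt_id t).const_mul (2 * σ)).const_add (2 * x)
    have hs : ∀ (n : ℕ) t, HasDerivAt (iteratedDeriv n f) (iteratedDeriv (n + 1) f t) t := by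
      intro n t
      rw [iteratedDeriv_succ]
      exact (hd n t).hasDerivAt
    intro n
    induction n with
    | zero =>
      intro t
      have e : iteratedDeriv (0 + 1) f = fun t => (2 * x + 2 * σ * t) * iteratedDeriv 0 f t := by
        rw [zero_add, hf1, iteratedDeriv_zero]
      have := (hlin t).mul (hs 0 t)
      rw [iteratedDeriv_succ]
      nth_rewrite 1 [e]
      refine (HasDerivAt.deriv this).trans ?_
      push_cast; ring
    | succ n ih =>
      intro t
      have e : iteratedDeriv (n + 1 + 1) f = fun t =>
        (2 * x + 2 * σ * t) * iteratedDeriv (n + 1) f t + 2 * σ * (n + 1) * iteratedDeriv n f t :=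
        funext ih
      have := ((hlin t).mul (hs (n + 1) t)).add ((hs n t).const_mul (2 * σ * (n + 1)))
      rw [iteratedDeriv_succ]
      nth_rewrite 1 [e]
      refine (HasDerivAt.deriv this).trans ?_
      push_cast; ring
  have hG : ∀ n : ℕ, iteratedDeriv n f 0 = G n ∧ iteratedDeriv (n + 1) f 0 = G (n + 1) := by
    intro n
    induction n with
    | zero => simp only [zero_add, hf1, h1, iteratedDeriv_zero, h0]; simp [hf]
    | succ n ih =>
      refine ⟨ih.2, ?_⟩
      rw [key, ih.1, ih.2, h2]; ring
  have := Complex.hasSum_taylorSeries_of_entire (f := f) (by rw [hf]; fun_prop) 0 t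
  convert! this using 1
  ext n
  rw [(hG n).1, sub_zero, smul_eq_mul, smul_eq_mul]
  ring

theorem aux_int {E : Type*} [NormedAddCommGroup E] (g : ℝ → E) (hg : Continuous g) (b C : ℝ)
    (hb : 0 < b) (h : ∀ s, ‖g s‖ ≤ C * Real.exp (-b * s ^ 2)) : MeasureTheory.Integrable g := by
  exact ((integrable_exp_neg_mul_sq hb).const_mul C).mono' hg.aestronglyMeasurable (.of_forall h)

theorem aux_norm (y s : ℝ) : ‖(y : ℂ) + s * Complex.I‖ ^ 2 = y ^ 2 + s ^ 2 := by
  rw [Complex.sq_norm, Complex.normSq_add_mul_I]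

theorem aux_cont (y : ℝ) (n : ℕ) : Continuous fun s : ℝ =>
    ((y : ℂ) + s * Complex.I) ^ n * Complex.exp (-(s : ℂ) ^ 2) := by fun_prop

theorem aux_nexp (s : ℝ) : ‖Complex.exp (-(s : ℂ) ^ 2)‖ = Real.exp (-s ^ 2) := by
  rw [Complex.norm_exp]; norm_cast

theorem aux_pow (y : ℝ) (n : ℕ) : MeasureTheory.Integrable fun s : ℝ =>
    ((y : ℂ) + s * Complex.I) ^ n * Complex.exp (-(s : ℂ) ^ 2) := by
  refine aux_int _ (aux_cont y n) (1 / 2) (n.factorial * Real.exp ((1 + y ^ 2) / 2)) (by norm_num) ?_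
  intro s
  rw [norm_mul, norm_pow, aux_nexp]
  have h := aux_norm y s
  set w := ‖(y : ℂ) + s * Complex.I‖
  have hw : 0 ≤ w := norm_nonneg _
  have h1 : w ^ n ≤ n.factorial * Real.exp w := by
    have := Real.pow_div_factorial_le_exp w hw n
    rw [div_le_iff₀ (by positivity)] at this
    linarith
  have h2 : Real.exp w ≤ Real.exp ((1 + y ^ 2) / 2 + s ^ 2 / 2) := by
    apply Real.exp_le_exp.2
    nlinarith [sq_nonneg (w - 1)]
  calc w ^ n * Real.exp (-s ^ 2) ≤ n.factorial * Real.exp ((1 + y ^ 2) / 2 + s ^ 2 / 2) * Real.exp (-s ^ 2) := by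
        gcongr; exact h1.trans (by gcongr)
    _ = _ := by
        rw [mul_assoc, mul_assoc, ← Real.exp_add, ← Real.exp_add]; ring_nf

theorem aux_parts (y : ℝ) (n : ℕ) :
    ∫ s : ℝ, ((y : ℂ) + s * Complex.I) ^ (n + 1) * Complex.exp (-(s : ℂ) ^ 2) =
     y * (∫ s : ℝ, ((y : ℂ) + s * Complex.I) ^ n * Complex.exp (-(s : ℂ) ^ 2))
     - (n / 2 : ℂ) * (∫ s : ℝ, ((y : ℂ) + s * Complex.I) ^ (n - 1) * Complex.exp (-(s : ℂ) ^ 2)) := by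
  set F : ℕ → ℝ → ℂ := fun n s => ((y : ℂ) + s * Complex.I) ^ n * Complex.exp (-(s : ℂ) ^ 2) with hF
  have hi : ∀ n, MeasureTheory.Integrable (F n) := aux_pow y
  have hd : ∀ s : ℝ, HasDerivAt (F n)
      (Complex.I * (n * F (n - 1) s + 2 * (F (n + 1) s - y * F n s))) s := by
    intro s
    have h1 : HasDerivAt (fun z : ℂ => (y : ℂ) + z * Complex.I) Complex.I (s : ℂ) := by
      simpa using ((hasDerivAt_id (s : ℂ)).mul_const Complex.I).const_add (y : ℂ)
    have h2 : HasDerivAt (fun z : ℂ => -z ^ 2) (-(2 * s)) (s : ℂ) := by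
      have h := (hasDerivAt_pow 2 (s : ℂ)).neg
      refine HasDerivAt.congr_deriv h ?_
      push_cast; ring
    have := ((h1.pow n).mul h2.cexp).comp_ofReal
    refine this.congr_deriv ?_
    simp only [hF, pow_succ _ n, Pi.pow_apply]
    linear_combination (-2 * (s : ℂ) * ((y : ℂ) + s * Complex.I) ^ n * Complex.exp (-(s : ℂ) ^ 2)) * Complex.I_sq
  have h0 := MeasureTheory.integral_eq_zero_of_hasDerivAt_of_integrable hd
    (by
      refine MeasureTheory.Integrable.const_mul ?_ _
      exact ((hi _).const_mul _).add ((((hi _)).sub ((hi _).const_mul _)).const_mul _)) (hi n)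
  have e1 : ∫ s, ((n : ℂ) * F (n - 1) s + 2 * (F (n + 1) s - y * F n s)) =
      (∫ s, (n : ℂ) * F (n - 1) s) + ∫ s, 2 * (F (n + 1) s - y * F n s) :=
    MeasureTheory.integral_add ((hi _).const_mul _)
      ((((hi _)).sub ((hi _).const_mul _)).const_mul _)
  have e2 : ∫ s, (F (n + 1) s - y * F n s) = (∫ s, F (n + 1) s) - ∫ s, y * F n s :=
    MeasureTheory.integral_sub (hi _) ((hi _).const_mul _)
  rw [MeasureTheory.integral_const_mul, e1, MeasureTheory.integral_const_mul,
    MeasureTheory.integral_const_mul, e2, MeasureTheory.integral_const_mul] at h0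
  have h3 := (mul_eq_zero.1 h0).resolve_left Complex.I_ne_zero
  linear_combination (1 / 2 : ℂ) * h3

theorem aux_herm (y : ℝ) (n : ℕ) :
    (2 : ℂ) ^ n * ∫ s : ℝ, ((y : ℂ) + s * Complex.I) ^ n * Complex.exp (-(s : ℂ) ^ 2) =
      (Real.sqrt Real.pi : ℂ) * (physHermite n y : ℂ) := by
  have h0 : ∫ s : ℝ, ((y : ℂ) + s * Complex.I) ^ 0 * Complex.exp (-(s : ℂ) ^ 2) =
      (Real.sqrt Real.pi : ℂ) := by
    have := integral_gaussian 1
    rw [div_one] at this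
    rw [← this, ← integral_complex_ofReal]
    congr 1; ext s; push_cast; simp
  have h1 := aux_parts y 0
  suffices H : ∀ n : ℕ, ((2 : ℂ) ^ n * ∫ s : ℝ, ((y : ℂ) + s * Complex.I) ^ n * Complex.exp (-(s : ℂ) ^ 2) =
      (Real.sqrt Real.pi : ℂ) * (physHermite n y : ℂ)) ∧
      ((2 : ℂ) ^ (n + 1) * ∫ s : ℝ, ((y : ℂ) + s * Complex.I) ^ (n + 1) * Complex.exp (-(s : ℂ) ^ 2) =
      (Real.sqrt Real.pi : ℂ) * (physHermite (n + 1) y : ℂ)) from (H n).1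
  intro n
  induction n with
  | zero =>
    rw [h1, h0]
    simp only [physHermite]
    push_cast
    constructor <;> ring
  | succ n ih =>
    refine ⟨ih.2, ?_⟩
    rw [aux_parts y (n + 1)]
    simp only [physHermite, Nat.add_sub_cancel]
    push_cast
    linear_combination (2 * (y : ℂ)) * ih.2 - 2 * ((n : ℂ) + 1) * ih.1

/-- majorant sequence -/
noncomputable def auxMaj (x : ℝ) : ℕ → ℝ
  | 0 => 1
  | 1 => 2 * x
  | (n + 2) => 2 * x * auxMaj x (n + 1) + 2 * (n + 1) * auxMaj x n

theorem aux_maj (x : ℝ) (n : ℕ) : |physHermite n x| ≤ auxMaj |x| n := by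
  suffices H : ∀ n : ℕ, |physHermite n x| ≤ auxMaj |x| n ∧
    |physHermite (n + 1) x| ≤ auxMaj |x| (n + 1) from (H n).1
  intro n
  induction n with
  | zero => simp [physHermite, auxMaj, abs_mul]
  | succ n ih =>
    refine ⟨ih.2, ?_⟩
    simp only [physHermite, auxMaj]
    refine (abs_sub _ _).trans ?_
    rw [abs_mul, abs_mul, abs_mul, abs_mul, abs_two, abs_of_nonneg (by positivity : (0 : ℝ) ≤ n + 1)]
    have := ih.1
    have := ih.2
    gcongr

theorem aux_majgen (x t : ℝ) :
    HasSum (fun n : ℕ => auxMaj x n * t ^ n / (n.factorial : ℝ)) (Real.exp (2 * x * t + t ^ 2)) := by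
  have := aux_gen x 1 (fun n => (auxMaj x n : ℂ)) (by simp [auxMaj]) (by simp [auxMaj])
    (by intro n; simp only [auxMaj]; push_cast; ring) t
  rw [← Complex.hasSum_ofReal]
  push_cast
  simpa using this

theorem aux_phgen (x : ℝ) (t : ℂ) :
    HasSum (fun n : ℕ => (physHermite n x : ℂ) * t ^ n / (n.factorial : ℂ))
      (Complex.exp (2 * x * t - t ^ 2)) := by
  have := aux_gen x (-1) (fun n => (physHermite n x : ℂ)) (by simp [physHermite])
    (by simp [physHermite])
    (by intro n; simp only [physHermite]; push_cast; ring) t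
  convert this using 2
  ring

theorem aux_main (q : ℝ) (hq0 : 0 < q) (hq1 : q < 1) (x y : ℝ) :
    HasSum (fun n : ℕ => ∫ s : ℝ, (physHermite n x : ℂ) * (q * ((y : ℂ) + s * Complex.I)) ^ n /
        (n.factorial : ℂ) * Complex.exp (-(s : ℂ) ^ 2))
      (∫ s : ℝ, Complex.exp (2 * x * (q * ((y : ℂ) + s * Complex.I))
        - (q * ((y : ℂ) + s * Complex.I)) ^ 2) * Complex.exp (-(s : ℂ) ^ 2)) := by
  have hb : ∀ s : ℝ, HasSum (fun n : ℕ => auxMaj |x| n * (q * ‖(y : ℂ) + s * Complex.I‖) ^ n /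
      (n.factorial : ℝ) * Real.exp (-s ^ 2)) (Real.exp (2 * |x| * (q * ‖(y : ℂ) + s * Complex.I‖) +
        (q * ‖(y : ℂ) + s * Complex.I‖) ^ 2) * Real.exp (-s ^ 2)) := fun s =>
    (aux_majgen |x| _).mul_right _
  refine MeasureTheory.hasSum_integral_of_dominated_convergence
    (fun n s => auxMaj |x| n * (q * ‖(y : ℂ) + s * Complex.I‖) ^ n /
      (n.factorial : ℝ) * Real.exp (-s ^ 2)) ?_ ?_ ?_ ?_ ?_
  · intro n
    apply Continuous.aestronglyMeasurable
    fun_prop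
  · intro n
    refine .of_forall fun s => ?_
    rw [norm_mul, aux_nexp, norm_div, norm_mul, norm_pow, norm_mul, Complex.norm_real,
      Complex.norm_real, Complex.norm_natCast, Real.norm_eq_abs, Real.norm_eq_abs, abs_of_pos hq0]
    have := aux_maj x n
    gcongr
  · exact .of_forall fun s => (hb s).summable
  · simp_rw [fun s => (hb s).tsum_eq]
    have hq : 0 < 1 - q ^ 2 := by nlinarith
    set ε := (1 - q ^ 2) / 2 with hε
    have hε0 : 0 < ε := by positivity
    refine aux_int _ (by fun_prop) ε (Real.exp ((q * |x|) ^ 2 / ε + (ε + q ^ 2) * y ^ 2)) hε0 ?_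
    intro s
    rw [← Real.exp_add, ← Real.exp_add, Real.norm_eq_abs, Real.abs_exp]
    apply Real.exp_le_exp.2
    have h := aux_norm y s
    set w := ‖(y : ℂ) + s * Complex.I‖
    have h1 : 2 * (q * |x|) * w ≤ (q * |x|) ^ 2 / ε + ε * w ^ 2 := by
      have : (q * |x|) ^ 2 / ε + ε * w ^ 2 - 2 * (q * |x|) * w = (q * |x| - ε * w) ^ 2 / ε := by
        field_simp; ring
      have : 0 ≤ (q * |x| - ε * w) ^ 2 / ε := by positivity
      linarith
    have h2 : q ^ 2 = 1 - 2 * ε := by rw [hε]; ring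
    rw [h] at h1
    rw [mul_pow q w, h, h2]
    linarith
  · exact .of_forall fun s => (aux_phgen x _).mul_right _

theorem aux_val (q : ℝ) (hq0 : 0 < q) (hq1 : q < 1) (x y : ℝ) :
    (∫ s : ℝ, Complex.exp (2 * x * (q * ((y : ℂ) + s * Complex.I))
        - (q * ((y : ℂ) + s * Complex.I)) ^ 2) * Complex.exp (-(s : ℂ) ^ 2)) =
    ((Real.sqrt (Real.pi / (1 - q ^ 2)) * Real.exp ((2 * q * x * y - q ^ 2 * x ^ 2 - q ^ 2 * y ^ 2)
      / (1 - q ^ 2)) : ℝ) : ℂ) := by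
  have hq : 0 < 1 - q ^ 2 := by nlinarith
  have hb : (((q ^ 2 - 1 : ℝ) : ℂ)).re < 0 := by
    rw [Complex.ofReal_re]; linarith
  have := integral_cexp_quadratic hb (Complex.I * (2 * x * q - 2 * q ^ 2 * y))
    (2 * x * q * y - q ^ 2 * y ^ 2)
  have e : ∀ s : ℝ, Complex.exp (2 * x * (q * ((y : ℂ) + s * Complex.I))
        - (q * ((y : ℂ) + s * Complex.I)) ^ 2) * Complex.exp (-(s : ℂ) ^ 2) =
      Complex.exp (((q ^ 2 - 1 : ℝ) : ℂ) * s ^ 2 + Complex.I * (2 * x * q - 2 * q ^ 2 * y) * s +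
        (2 * x * q * y - q ^ 2 * y ^ 2)) := by
    intro s
    rw [← Complex.exp_add]
    congr 1
    push_cast
    linear_combination (-(q : ℂ) ^ 2 * s ^ 2) * Complex.I_sq
  simp_rw [e]
  rw [this]
  rw [Complex.ofReal_mul]
  congr 1
  · rw [Real.sqrt_eq_rpow, Complex.ofReal_cpow (by positivity)]
    push_cast
    congr 2
    ring
  · rw [Complex.ofReal_exp]
    congr 1
    have h1 : ((1 : ℂ) - q ^ 2) ≠ 0 := by exact_mod_cast hq.ne'
    have h2 : ((q : ℂ) ^ 2 - 1) ≠ 0 := by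
      intro h; apply h1; linear_combination -h
    rw [mul_pow, Complex.I_sq]
    push_cast
    rw [show (q : ℂ) ^ 2 - 1 = -(1 - q ^ 2) by ring]
    field_simp
    ring

/-- **Mehler's formula (equation (3.1) of Tracy–Widom, "Differential Equations for Dyson
Processes").**  For `0 < q < 1` and all real `λ, μ`, the series
`Σ_{i=0}^∞ q^i p_i(λ) p_i(μ) e^{−μ²}` converges with sum the Mehler kernel `K(q; λ, μ)`. -/
theorem mehler_formula (q : ℝ) (hq0 : 0 < q) (hq1 : q < 1) (lam mu : ℝ) :
    HasSum (fun i : ℕ => q ^ i * normHermite i lam * normHermite i mu * Real.exp (-mu ^ 2))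
      (mehlerK q lam mu) := by
  have hq : 0 < 1 - q ^ 2 := by nlinarith
  have hpi := Real.pi_pos
  have hsp : Real.sqrt Real.pi * Real.sqrt Real.pi = Real.pi := Real.mul_self_sqrt hpi.le
  have hsp0 : 0 < Real.sqrt Real.pi := Real.sqrt_pos.2 hpi
  have h := aux_main q hq0 hq1 lam mu
  rw [aux_val q hq0 hq1] at h
  have e : ∀ n : ℕ, (∫ s : ℝ, (physHermite n lam : ℂ) * (q * ((mu : ℂ) + s * Complex.I)) ^ n /
        (n.factorial : ℂ) * Complex.exp (-(s : ℂ) ^ 2)) =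
      ((physHermite n lam * q ^ n / n.factorial * (Real.sqrt Real.pi * physHermite n mu / 2 ^ n) : ℝ) : ℂ) := by
    intro n
    have h1 := aux_herm mu n
    have h2 : (∫ s : ℝ, ((mu : ℂ) + s * Complex.I) ^ n * Complex.exp (-(s : ℂ) ^ 2)) =
      (Real.sqrt Real.pi : ℂ) * (physHermite n mu : ℂ) / 2 ^ n := by
      rw [← h1, mul_div_cancel_left₀ _ (pow_ne_zero n two_ne_zero)]
    push_cast
    rw [← h2, ← MeasureTheory.integral_const_mul]
    congr 1; ext s
    rw [mul_pow]; ring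
  simp_rw [e] at h
  rw [Complex.hasSum_ofReal] at h
  have h3 := h.mul_right (Real.exp (-mu ^ 2) / Real.pi)
  convert! h3 using 1
  · ext n
    have hs : Real.sqrt (2 ^ n * n.factorial * Real.sqrt Real.pi) *
      Real.sqrt (2 ^ n * n.factorial * Real.sqrt Real.pi) = 2 ^ n * n.factorial * Real.sqrt Real.pi :=
      Real.mul_self_sqrt (by positivity)
    have hr : q ^ n * normHermite n lam * normHermite n mu * Real.exp (-mu ^ 2) =
      q ^ n * physHermite n lam * physHermite n mu * Real.exp (-mu ^ 2) /
        (2 ^ n * n.factorial * Real.sqrt Real.pi) := by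
      rw [← hs]; simp only [normHermite]; ring
    rw [hr]
    nth_rewrite 3 [← hsp]
    field_simp
  · rw [mehlerK, Real.sqrt_mul hpi.le, Real.sqrt_div hpi.le]
    have e2 : Real.exp (-q ^ 2 * lam ^ 2 / (1 - q ^ 2) - mu ^ 2 / (1 - q ^ 2)
      + 2 * q * lam * mu / (1 - q ^ 2)) = Real.exp ((2 * q * lam * mu - q ^ 2 * lam ^ 2 - q ^ 2 * mu ^ 2)
      / (1 - q ^ 2)) * Real.exp (-mu ^ 2) := by
      rw [← Real.exp_add]; congr 1; field_simp; ring
    rw [e2]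
    have : 0 < Real.sqrt (1 - q ^ 2) := Real.sqrt_pos.2 hq
    nth_rewrite 3 [← hsp]
    field_simp
end

section
/- For every q with 0 < q < 1, every nonnegative integer i, and every real λ, the function μ ↦ K(q; λ, μ) p_i(μ) is integrable on ℝ and ∫_ℝ K(q; λ, μ) p_i(μ) dμ = q^i p_i(λ). -/
open MeasureTheory

lemma physHermite_hasDerivAt (n : ℕ) : ∀ x : ℝ,
    HasDerivAt (physHermite (n + 1)) (2 * ((n : ℝ) + 1) * physHermite n x) x := by
  induction n using Nat.strong_induction_on with
  | _ n ih =>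
    intro x
    match n, ih with
    | 0, _ =>
      have h : HasDerivAt (fun x : ℝ => 2 * x) (2 * 1) x := (hasDerivAt_id x).const_mul 2
      simpa [physHermite] using h
    | 1, ih =>
      have h0 := ih 0 (by omega) x
      have h : HasDerivAt (fun x : ℝ => 2 * x) (2 * 1) x := (hasDerivAt_id x).const_mul 2
      have h2 := (h.mul h0).sub_const 2
      have e : physHermite (1 + 1) = fun y => ((fun x : ℝ => 2 * x) * physHermite (0 + 1)) y - 2 := by
        funext y; simp [physHermite]
      rw [e]
      refine h2.congr_deriv ?_
      simp [physHermite]; ring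
    | (k + 2), ih =>
      have h0 := ih (k + 1) (by omega) x
      have h1 := ih k (by omega) x
      have h : HasDerivAt (fun x : ℝ => 2 * x) (2 * 1) x := (hasDerivAt_id x).const_mul 2
      have h2 := (h.mul h0).sub (h1.const_mul (2 * (((k + 1 : ℕ) : ℝ) + 1)))
      have e : physHermite (k + 2 + 1) = (fun x : ℝ => 2 * x) * physHermite (k + 1 + 1) - fun y => (2 * (((k + 1 : ℕ) : ℝ) + 1)) * physHermite (k + 1) y := by
        funext y; simp [physHermite]
      rw [e]
      refine h2.congr_deriv ?_
      simp only [physHermite]; push_cast; ring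

lemma physHermite_poly (n : ℕ) : ∃ p : Polynomial ℝ, ∀ x, physHermite n x = p.eval x := by
  induction n using Nat.twoStepInduction with
  | zero => exact ⟨1, by simp [physHermite]⟩
  | one => exact ⟨2 * Polynomial.X, by simp [physHermite]⟩
  | more n h0 h1 =>
    obtain ⟨p, hp⟩ := h0
    obtain ⟨r, hr⟩ := h1
    refine ⟨Polynomial.C 2 * Polynomial.X * r - Polynomial.C (2 * ((n : ℝ) + 1)) * p, fun x => ?_⟩
    simp only [physHermite, hp, hr, Polynomial.eval_sub, Polynomial.eval_mul, Polynomial.eval_C,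
      Polynomial.eval_X]

lemma poly_gauss_integrable0 {b : ℝ} (hb : 0 < b) (p : Polynomial ℝ) :
    Integrable (fun x : ℝ => Real.exp (-b * x ^ 2) * p.eval x) := by
  induction p using Polynomial.induction_on' with
  | add p r hp hr => 
    refine (hp.add hr).congr (Filter.Eventually.of_forall fun x => ?_)
    simp [mul_add]
  | monomial n a =>
    have := (integrable_rpow_mul_exp_neg_mul_sq hb (s := n)
      (by have : (0 : ℝ) ≤ n := n.cast_nonneg
          linarith)).const_mul a
    refine this.congr (Filter.Eventually.of_forall fun x => ?_)
    simp only [Polynomial.eval_monomial, Real.rpow_natCast]; ring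

lemma poly_gauss_integrable {b : ℝ} (hb : 0 < b) (m : ℝ) (p : Polynomial ℝ) :
    Integrable (fun x : ℝ => Real.exp (-b * (x - m) ^ 2) * p.eval x) := by
  have := (poly_gauss_integrable0 hb (p.comp (Polynomial.X + Polynomial.C m))).comp_sub_right m
  simpa using this

lemma herm_int {b : ℝ} (hb : 0 < b) (m : ℝ) (n : ℕ) :
    Integrable (fun x : ℝ => Real.exp (-b * (x - m) ^ 2) * physHermite n x) := by
  obtain ⟨p, hp⟩ := physHermite_poly n
  simpa [hp] using poly_gauss_integrable hb m p

lemma herm_int' {b : ℝ} (hb : 0 < b) (m : ℝ) (n : ℕ) :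
    Integrable (fun x : ℝ => Real.exp (-b * (x - m) ^ 2) * (x * physHermite n x)) := by
  obtain ⟨p, hp⟩ := physHermite_poly n
  refine (poly_gauss_integrable hb m (Polynomial.X * p)).congr
    (Filter.Eventually.of_forall fun x => ?_)
  simp only [hp, Polynomial.eval_mul, Polynomial.eval_X]

lemma herm_parts {b : ℝ} (hb : 0 < b) (m : ℝ) (n : ℕ) :
    b * ∫ x : ℝ, Real.exp (-b * (x - m) ^ 2) * (x * physHermite (n + 1) x) =
    b * m * (∫ x : ℝ, Real.exp (-b * (x - m) ^ 2) * physHermite (n + 1) x) +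
    (n + 1) * ∫ x : ℝ, Real.exp (-b * (x - m) ^ 2) * physHermite n x := by
  have i0 := (herm_int hb m n).const_mul (2 * ((n : ℝ) + 1))
  have i1 := (herm_int hb m (n + 1)).const_mul (2 * b * m)
  have i2 := (herm_int' hb m (n + 1)).const_mul (2 * b)
  have hd : ∀ x : ℝ, HasDerivAt (fun x => Real.exp (-b * (x - m) ^ 2) * physHermite (n + 1) x)
      (2 * ((n : ℝ) + 1) * (Real.exp (-b * (x - m) ^ 2) * physHermite n x)
        + 2 * b * m * (Real.exp (-b * (x - m) ^ 2) * physHermite (n + 1) x)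
        - 2 * b * (Real.exp (-b * (x - m) ^ 2) * (x * physHermite (n + 1) x))) x := by
    intro x
    have h1 := (((((hasDerivAt_id x).sub_const m).pow 2).const_mul (-b)).exp).mul
      (physHermite_hasDerivAt n x)
    refine h1.congr_deriv ?_
    simp; ring
  have := integral_eq_zero_of_hasDerivAt_of_integrable hd ((i0.add i1).sub i2) (herm_int hb m (n + 1))
  have i01 : Integrable (fun x => 2 * ((n : ℝ) + 1) * (Real.exp (-b * (x - m) ^ 2) * physHermite n x)
        + 2 * b * m * (Real.exp (-b * (x - m) ^ 2) * physHermite (n + 1) x)) := i0.add i1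
  rw [integral_sub i01 i2, integral_add i0 i1, integral_const_mul, integral_const_mul,
    integral_const_mul] at this
  linarith

lemma herm_integral (q lam : ℝ) (hs : 0 < 1 - q ^ 2) (n : ℕ) :
    ∫ x : ℝ, Real.exp (-(1 - q ^ 2)⁻¹ * (x - q * lam) ^ 2) * physHermite n x =
      Real.sqrt (Real.pi * (1 - q ^ 2)) * (q ^ n * physHermite n lam) := by
  have hb : 0 < (1 - q ^ 2)⁻¹ := inv_pos.2 hs
  have z : ∫ x : ℝ, Real.exp (-(1 - q ^ 2)⁻¹ * (x - q * lam) ^ 2) =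
      Real.sqrt (Real.pi * (1 - q ^ 2)) := by
    rw [integral_sub_right_eq_self (fun x : ℝ => Real.exp (-(1 - q ^ 2)⁻¹ * x ^ 2)) (q * lam),
      integral_gaussian, div_inv_eq_mul]
  induction n using Nat.twoStepInduction with
  | zero => simpa [physHermite] using z
  | one =>
    have i1 := (herm_int hb (q * lam) 1)
    have i0 := (herm_int hb (q * lam) 0)
    have hd : ∀ x : ℝ, HasDerivAt (fun x => Real.exp (-(1 - q ^ 2)⁻¹ * (x - q * lam) ^ 2))
      ((1 - q ^ 2)⁻¹ * (2 * (q * lam) * (Real.exp (-(1 - q ^ 2)⁻¹ * (x - q * lam) ^ 2) * physHermite 0 x)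
        - (Real.exp (-(1 - q ^ 2)⁻¹ * (x - q * lam) ^ 2) * physHermite 1 x))) x := by
      intro x
      have h1 := (((((hasDerivAt_id x).sub_const (q * lam)).pow 2).const_mul (-(1 - q ^ 2)⁻¹)).exp)
      refine h1.congr_deriv ?_
      simp [physHermite]; ring
    have := integral_eq_zero_of_hasDerivAt_of_integrable hd
      (((i0.const_mul (2 * (q * lam))).sub i1).const_mul _) (by simpa [physHermite] using i0)
    rw [integral_const_mul, integral_sub (i0.const_mul (2 * (q * lam))) i1, integral_const_mul] at this
    have h3 := (mul_eq_zero.1 this).resolve_left hb.ne'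
    have z' : ∫ x : ℝ, Real.exp (-(1 - q ^ 2)⁻¹ * (x - q * lam) ^ 2) * physHermite 0 x =
      Real.sqrt (Real.pi * (1 - q ^ 2)) := by simpa [physHermite] using z
    rw [z'] at h3
    have e : physHermite 1 lam = 2 * lam := rfl
    rw [e]
    linarith
  | more n h0 h1 =>
    have i0 := (herm_int hb (q * lam) n).const_mul (2 * ((n : ℝ) + 1))
    have i2 := (herm_int' hb (q * lam) (n + 1)).const_mul 2
    have hp := herm_parts hb (q * lam) n
    have e : ∀ x : ℝ, Real.exp (-(1 - q ^ 2)⁻¹ * (x - q * lam) ^ 2) * physHermite (n + 2) x =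
      2 * (Real.exp (-(1 - q ^ 2)⁻¹ * (x - q * lam) ^ 2) * (x * physHermite (n + 1) x)) -
      2 * ((n : ℝ) + 1) * (Real.exp (-(1 - q ^ 2)⁻¹ * (x - q * lam) ^ 2) * physHermite n x) := by
      intro x
      simp only [physHermite]; ring
    simp_rw [e]
    rw [integral_sub i2 i0, integral_const_mul, integral_const_mul]
    rw [h0, h1] at hp
    rw [h0]
    generalize (∫ x : ℝ, Real.exp (-(1 - q ^ 2)⁻¹ * (x - q * lam) ^ 2) * (x * physHermite (n + 1) x)) = J at hp ⊢
    have hJ : J = q * lam * (Real.sqrt (Real.pi * (1 - q ^ 2)) * (q ^ (n+1) * physHermite (n+1) lam))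
        + (1 - q ^ 2) * ((n + 1) * (Real.sqrt (Real.pi * (1 - q ^ 2)) * (q ^ n * physHermite n lam))) := by
      apply mul_left_cancel₀ hb.ne'
      rw [hp, mul_add, ← mul_assoc _ (1 - q ^ 2), inv_mul_cancel₀ hs.ne']
      ring
    rw [hJ]
    simp only [physHermite]; ring

theorem mehler_eigenfunction (q : ℝ) (hq0 : 0 < q) (hq1 : q < 1) (i : ℕ) (lam : ℝ) :
    Integrable (fun mu => mehlerK q lam mu * normHermite i mu) (volume : Measure ℝ) ∧
    ∫ mu : ℝ, mehlerK q lam mu * normHermite i mu = q ^ i * normHermite i lam := by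
  have hs : 0 < 1 - q ^ 2 := by nlinarith
  have e : ∀ mu, mehlerK q lam mu * normHermite i mu =
      ((Real.sqrt (Real.pi * (1 - q ^ 2)))⁻¹ * (Real.sqrt (2 ^ i * i.factorial * Real.sqrt Real.pi))⁻¹) *
      (Real.exp (-(1 - q ^ 2)⁻¹ * (mu - q * lam) ^ 2) * physHermite i mu) := by
    intro mu
    have : -q ^ 2 * lam ^ 2 / (1 - q ^ 2) - mu ^ 2 / (1 - q ^ 2) + 2 * q * lam * mu / (1 - q ^ 2)
      = -(1 - q ^ 2)⁻¹ * (mu - q * lam) ^ 2 := by ring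
    unfold mehlerK normHermite
    rw [this]; ring
  simp_rw [e]
  refine ⟨(herm_int (inv_pos.2 hs) _ i).const_mul _, ?_⟩
  rw [integral_const_mul, herm_integral q lam hs i]
  have h0 : Real.sqrt (Real.pi * (1 - q ^ 2)) ≠ 0 := (Real.sqrt_pos.2 (mul_pos Real.pi_pos hs)).ne'
  unfold normHermite
  generalize Real.sqrt (Real.pi * (1 - q ^ 2)) = s at *
  rw [div_eq_mul_inv]
  generalize (Real.sqrt (2 ^ i * i.factorial * Real.sqrt Real.pi))⁻¹ = t
  field_simp
end
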